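/- Let m, v, N ∈ ℕ with 2v ≤ N, let Ω be a compact subset of ℝ^d with a Borel probability measure μ, let 1 ≤ p < ∞, and let D_N = {g_1,…,g_N} ⊂ C(Ω) be a system of N functions. For each J ⊆ {1,…,N} put X_J := span{g_i : i ∈ J}, and let Σ_k(D_N) be the union of X_J over all J with |J| = k. Assume points ξ^1,…,ξ^m ∈ Ω are such that ‖u‖_p ≤ D max_{1≤j≤m}|u(ξ^j)| for every u ∈ Σ_{2v}(D_N). Then there exists a map Ψ : ℝ^m → L_p(Ω,μ), taking values in Σ_v(D_N), such that for every f ∈ C(Ω) one has ‖f − Ψ(f(ξ^1),…,f(ξ^m))‖_p ≤ (2D + 1) σ_v(f, D_N)_∞; in particular, for every compact subset F of C(Ω), the optimal sampling recovery quantity ρ_m^o(F, L_p(Ω,μ)) := inf over point sets ζ^1,…,ζ^m ∈ Ω and maps Φ : ℝ^m → L_p(Ω,μ) of sup_{f∈F}‖f − Φ(f(ζ^1),…,f(ζ^m))‖_p satisfies ρ_m^o(F, L_p(Ω,μ)) ≤ (2D + 1) σ_v(F, D_N)_∞. -/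

import Mathlib

open MeasureTheory

/-- The `L_p(μ)`-norm of a function `f`, `(∫ |f|^p dμ)^(1/p)`. -/
noncomputable def LpNorm {Ω : Type*} [MeasurableSpace Ω] (μ : Measure Ω) (p : ℝ)
    (f : Ω → ℝ) : ℝ :=
  (∫ ω, |f ω| ^ p ∂μ) ^ (1 / p)

/-- The uniform norm `sup_ω |f ω|`. -/
noncomputable def supNorm {Ω : Type*} (f : Ω → ℝ) : ℝ :=
  ⨆ ω, |f ω|

/-- `Σ_k(D_N)`: the set of `k`-term approximants with respect to the system `g`. -/
def sigmaSet {Ω : Type*} [TopologicalSpace Ω] {N : ℕ} (k : ℕ) (g : Fin N → C(Ω, ℝ)) :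
    Set C(Ω, ℝ) :=
  {u | ∃ J : Finset (Fin N), J.card = k ∧ u ∈ Submodule.span ℝ (g '' ↑J)}

/-- `σ_v(f, D_N)_∞`: the best `v`-term approximation of `f` in the uniform norm. -/
noncomputable def bestVTerm {Ω : Type*} [TopologicalSpace Ω] {N : ℕ}
    (v : ℕ) (g : Fin N → C(Ω, ℝ)) (f : C(Ω, ℝ)) : ℝ :=
  ⨅ h : sigmaSet v g, supNorm (fun ω => f ω - (h : C(Ω, ℝ)) ω)

/-- The optimal sampling recovery quantity `ρ_m^o(F, L_p(Ω,μ))`: the infimum over point sets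
`ζ^1,…,ζ^m` and recovery maps `Φ : ℝ^m → L_p(Ω,μ)` of `sup_{f ∈ F} ‖f - Φ(f(ζ))‖_p`. -/
noncomputable def rhoOpt {Ω : Type*} [TopologicalSpace Ω] [MeasurableSpace Ω]
    (μ : Measure Ω) (p : ℝ) (m : ℕ) (F : Set C(Ω, ℝ)) : ℝ :=
  ⨅ (ζ : Fin m → Ω) (Φ : (Fin m → ℝ) → Ω → ℝ),
    ⨆ f : F, LpNorm μ p (fun ω => (f : C(Ω, ℝ)) ω - Φ (fun j => (f : C(Ω, ℝ)) (ζ j)) ω)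

/-!
Among the elements of `Σ_v(D_N)`, let `Ψ y` be one whose samples are closest to `y` in `ℓ_∞^m`; it
exists because the samples of `Σ_v(D_N)` form a finite union of subspaces of `ℝ^m`, a closed set.
Let `f ∈ C(Ω)`, `h ∈ Σ_v(D_N)`, and let `w` be `Ψ` at the samples of `f`. By minimality, the samples
of `h - w` are bounded by twice those of `f - h`, hence by `2‖f - h‖_∞`. As `h - w ∈ Σ_{2v}(D_N)`,
the discretization inequality gives `‖h - w‖_p ≤ 2D‖f - h‖_∞`, and
`‖f - w‖_p ≤ ‖f - h‖_p + ‖h - w‖_p ≤ (2D + 1)‖f - h‖_∞`.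
-/

section LpNorm

variable {Ω : Type*} [MeasurableSpace Ω] {μ : Measure Ω} {p : ℝ} {f g : Ω → ℝ}

lemma LpNorm_nonneg : 0 ≤ LpNorm μ p f :=
  Real.rpow_nonneg (integral_nonneg fun _ => Real.rpow_nonneg (abs_nonneg _) _) _

lemma LpNorm_eq_toReal_eLpNorm (hp : 0 < p) (hf : MemLp f (ENNReal.ofReal p) μ) :
    LpNorm μ p f = (eLpNorm f (ENNReal.ofReal p) μ).toReal := by
  rw [hf.eLpNorm_eq_integral_rpow_norm (by simpa using hp) ENNReal.ofReal_ne_top,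
    ENNReal.toReal_ofReal (by positivity), ENNReal.toReal_ofReal hp.le]
  simp only [LpNorm, Real.norm_eq_abs, one_div]

lemma LpNorm_add_le (hp : 1 ≤ p) (hf : MemLp f (ENNReal.ofReal p) μ)
    (hg : MemLp g (ENNReal.ofReal p) μ) : LpNorm μ p (f + g) ≤ LpNorm μ p f + LpNorm μ p g := by
  have hp₀ : 0 < p := one_pos.trans_le hp
  rw [LpNorm_eq_toReal_eLpNorm hp₀ (hf.add hg), LpNorm_eq_toReal_eLpNorm hp₀ hf,
    LpNorm_eq_toReal_eLpNorm hp₀ hg, ← ENNReal.toReal_add hf.eLpNorm_ne_top hg.eLpNorm_ne_top]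
  exact ENNReal.toReal_mono (ENNReal.add_ne_top.2 ⟨hf.eLpNorm_ne_top, hg.eLpNorm_ne_top⟩)
    (eLpNorm_add_le hf.1 hg.1 (ENNReal.one_le_ofReal.2 hp))

lemma LpNorm_le_of_forall_abs_le [IsProbabilityMeasure μ] (hp : 0 < p) {C : ℝ}
    (hf : ∀ ω, |f ω| ≤ C) : LpNorm μ p f ≤ C := by
  have hC : 0 ≤ C :=
    have ⟨ω⟩ := nonempty_of_isProbabilityMeasure μ
    (abs_nonneg _).trans (hf ω)
  have integral_le : ∫ ω, |f ω| ^ p ∂μ ≤ C ^ p := by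
    calc ∫ ω, |f ω| ^ p ∂μ ≤ ∫ _, C ^ p ∂μ :=
          integral_mono_of_nonneg (.of_forall fun _ => by positivity) (integrable_const _)
            (.of_forall fun ω => Real.rpow_le_rpow (abs_nonneg _) (hf ω) hp.le)
      _ = C ^ p := by simp
  calc LpNorm μ p f ≤ (C ^ p) ^ (1 / p) :=
        Real.rpow_le_rpow (integral_nonneg fun _ => by positivity) integral_le (by positivity)
    _ = C := by rw [one_div, Real.rpow_rpow_inv hC hp.ne']

end LpNorm

section ContinuousOnCompact

variable {Ω : Type*} [TopologicalSpace Ω] [CompactSpace Ω]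

lemma supNorm_coe_eq_norm (f : C(Ω, ℝ)) : supNorm f = ‖f‖ :=
  (ContinuousMap.norm_eq_iSup_norm f).symm

variable [MeasurableSpace Ω] {μ : Measure Ω} {p : ℝ}

lemma memLp_coe_continuousMap [OpensMeasurableSpace Ω] [IsFiniteMeasure μ] (q : ENNReal)
    (f : C(Ω, ℝ)) : MemLp f q μ :=
  .of_bound f.continuous.aestronglyMeasurable ‖f‖ (.of_forall f.norm_coe_le_norm)

lemma LpNorm_coe_le_norm [IsProbabilityMeasure μ] (hp : 0 < p) (f : C(Ω, ℝ)) :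
    LpNorm μ p f ≤ ‖f‖ :=
  LpNorm_le_of_forall_abs_le hp f.norm_coe_le_norm

end ContinuousOnCompact

section SigmaSet

variable {Ω : Type*} [TopologicalSpace Ω] {N k l : ℕ} {g : Fin N → C(Ω, ℝ)}

lemma sigmaSet_nonempty (g : Fin N → C(Ω, ℝ)) (hk : k ≤ N) : (sigmaSet k g).Nonempty := by
  obtain ⟨J, -, hJ⟩ := Finset.exists_subset_card_eq (s := (Finset.univ : Finset (Fin N)))
    (hk.trans_eq (Finset.card_fin N).symm)
  exact ⟨0, J, hJ, Submodule.zero_mem _⟩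

lemma sub_mem_sigmaSet_add (hkl : k + l ≤ N) {a b : C(Ω, ℝ)} (ha : a ∈ sigmaSet k g)
    (hb : b ∈ sigmaSet l g) : a - b ∈ sigmaSet (k + l) g := by
  obtain ⟨J, rfl, ha⟩ := ha
  obtain ⟨K, rfl, hb⟩ := hb
  obtain ⟨L, hJKL, hL⟩ := Finset.exists_superset_card_eq (Finset.card_union_le J K)
    (hkl.trans_eq (Fintype.card_fin N).symm)
  have span_le {I : Finset (Fin N)} (hI : I ⊆ L) :
      Submodule.span ℝ (g '' I) ≤ Submodule.span ℝ (g '' L) :=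
    Submodule.span_mono (Set.image_mono (Finset.coe_subset.2 hI))
  exact ⟨L, hL, Submodule.sub_mem _ (span_le (Finset.union_subset_left hJKL) ha)
    (span_le (Finset.union_subset_right hJKL) hb)⟩

variable {E : Type*} [NormedAddCommGroup E] [NormedSpace ℝ E] [FiniteDimensional ℝ E]

lemma isClosed_image_sigmaSet (S : C(Ω, ℝ) →ₗ[ℝ] E) : IsClosed (S '' sigmaSet k g) := by
  have image_eq_iUnion : S '' sigmaSet k g =
      ⋃ J ∈ {J : Finset (Fin N) | J.card = k},
        ((Submodule.span ℝ (g '' J)).map S : Set E) := by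
    ext y
    simp only [sigmaSet, Set.mem_image, Set.mem_iUnion, Set.mem_ofPred_eq, SetLike.mem_coe,
      Submodule.mem_map, exists_prop]
    grind
  rw [image_eq_iUnion]
  exact (Set.toFinite _).isClosed_biUnion fun _ _ => Submodule.closed_of_finiteDimensional _

lemma exists_isMinOn_norm_sub_sigmaSet (g : Fin N → C(Ω, ℝ)) (hk : k ≤ N)
    (S : C(Ω, ℝ) →ₗ[ℝ] E) (y : E) :
    ∃ w ∈ sigmaSet k g, IsMinOn (fun h => ‖y - S h‖) (sigmaSet k g) w := by
  obtain ⟨_, ⟨w, hw, rfl⟩, infDist_eq⟩ :=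
    isClosed_image_sigmaSet S |>.exists_infDist_eq_dist ((sigmaSet_nonempty g hk).image S) y
  refine ⟨w, hw, isMinOn_iff.2 fun h hh => ?_⟩
  simpa only [infDist_eq, dist_eq_norm] using
    Metric.infDist_le_dist_of_mem (x := y) (Set.mem_image_of_mem S hh)

end SigmaSet

section BestVTerm

variable {Ω : Type*} [TopologicalSpace Ω] {N v : ℕ} {g : Fin N → C(Ω, ℝ)}

lemma supNorm_nonneg {X : Type*} (f : X → ℝ) : 0 ≤ supNorm f :=
  Real.iSup_nonneg fun _ => abs_nonneg _

lemma bestVTerm_nonneg (f : C(Ω, ℝ)) : 0 ≤ bestVTerm v g f :=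
  Real.iInf_nonneg fun _ => supNorm_nonneg _

variable [CompactSpace Ω]

lemma bestVTerm_le_norm_sub {h : C(Ω, ℝ)} (hh : h ∈ sigmaSet v g) (f : C(Ω, ℝ)) :
    bestVTerm v g f ≤ ‖f - h‖ := by
  rw [← supNorm_coe_eq_norm]
  exact ciInf_le ⟨0, Set.forall_mem_range.2 fun _ => supNorm_nonneg _⟩
    (⟨h, hh⟩ : sigmaSet v g)

lemma le_mul_bestVTerm (hv : v ≤ N) {a c : ℝ} (hc : 0 ≤ c) {f : C(Ω, ℝ)}
    (ha : ∀ h ∈ sigmaSet v g, a ≤ c * ‖f - h‖) : a ≤ c * bestVTerm v g f := by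
  have : Nonempty (sigmaSet v g) := (sigmaSet_nonempty g hv).to_subtype
  rw [bestVTerm, Real.mul_iInf_of_nonneg hc]
  refine le_ciInf fun h => (ha h h.2).trans_eq ?_
  rw [← supNorm_coe_eq_norm]
  rfl

lemma bddAbove_range_bestVTerm (g : Fin N → C(Ω, ℝ)) (hv : v ≤ N) {F : Set C(Ω, ℝ)}
    (hF : Bornology.IsBounded F) : BddAbove (Set.range fun f : F => bestVTerm v g f) := by
  obtain ⟨h, hh⟩ := sigmaSet_nonempty g hv
  obtain ⟨C, hC⟩ := hF.exists_norm_le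
  refine ⟨C + ‖h‖, Set.forall_mem_range.2 fun f => ?_⟩
  calc bestVTerm v g f ≤ ‖(f : C(Ω, ℝ)) - h‖ := bestVTerm_le_norm_sub hh f
    _ ≤ ‖(f : C(Ω, ℝ))‖ + ‖h‖ := norm_sub_le _ _
    _ ≤ C + ‖h‖ := by gcongr; exact hC f f.2

end BestVTerm

section Sampling

variable {Ω ι : Type*} [TopologicalSpace Ω]

/-- The sampling operator `f ↦ (f (ξ j))_j`, i.e. `S(f, ξ)`. For finite `ι` its codomain carries the
sup norm, which is the norm in which samples are compared. -/
def sampling (ξ : ι → Ω) : C(Ω, ℝ) →L[ℝ] (ι → ℝ) :=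
  .pi fun j => ContinuousMap.evalCLM ℝ (ξ j)

variable [Fintype ι] (ξ : ι → Ω)

lemma norm_sampling_eq_iSup (u : C(Ω, ℝ)) : ‖sampling ξ u‖ = ⨆ j, |u (ξ j)| :=
  le_antisymm
    ((pi_norm_le_iff_of_nonneg (Real.iSup_nonneg fun _ => abs_nonneg _)).2 fun j =>
      le_ciSup (f := fun j => |u (ξ j)|) (Set.finite_range _).bddAbove j)
    (Real.iSup_le (norm_le_pi_norm (sampling ξ u)) (norm_nonneg _))

lemma norm_sampling_le [CompactSpace Ω] (u : C(Ω, ℝ)) : ‖sampling ξ u‖ ≤ ‖u‖ :=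
  (pi_norm_le_iff_of_nonneg (norm_nonneg u)).2 fun j => u.norm_coe_le_norm (ξ j)

variable {ξ}

lemma norm_sampling_sub_le_of_isMinOn [CompactSpace Ω] {A : Set C(Ω, ℝ)} {f w h : C(Ω, ℝ)}
    (hw : IsMinOn (fun u => ‖sampling ξ f - sampling ξ u‖) A w) (hh : h ∈ A) :
    ‖sampling ξ (h - w)‖ ≤ 2 * ‖f - h‖ :=
  calc ‖sampling ξ (h - w)‖
      = ‖(sampling ξ f - sampling ξ w) - (sampling ξ f - sampling ξ h)‖ := by
        rw [map_sub, sub_sub_sub_cancel_left]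
    _ ≤ ‖sampling ξ f - sampling ξ w‖ + ‖sampling ξ f - sampling ξ h‖ := norm_sub_le _ _
    _ ≤ 2 * ‖sampling ξ f - sampling ξ h‖ := by
        rw [two_mul]
        gcongr
        exact hw hh
    _ = 2 * ‖sampling ξ (f - h)‖ := by rw [map_sub]
    _ ≤ 2 * ‖f - h‖ := by
        gcongr
        exact norm_sampling_le ξ _

end Sampling

section Recovery

variable {Ω : Type*} [TopologicalSpace Ω] [MeasurableSpace Ω] {μ : Measure Ω} {p : ℝ}

lemma rhoOpt_le {m : ℕ} {F : Set C(Ω, ℝ)} {C : ℝ} (hC : 0 ≤ C) (ζ : Fin m → Ω)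
    (Φ : (Fin m → ℝ) → Ω → ℝ)
    (hΦ : ∀ f ∈ F, LpNorm μ p (fun ω => f ω - Φ (fun j => f (ζ j)) ω) ≤ C) :
    rhoOpt μ p m F ≤ C := by
  have error_nonneg (ζ : Fin m → Ω) (Φ : (Fin m → ℝ) → Ω → ℝ) :
      0 ≤ ⨆ f : F, LpNorm μ p
        (fun ω => (f : C(Ω, ℝ)) ω - Φ (fun j => (f : C(Ω, ℝ)) (ζ j)) ω) :=
    Real.iSup_nonneg fun _ => LpNorm_nonneg
  calc rhoOpt μ p m F
      ≤ _ := ciInf_le ⟨0, Set.forall_mem_range.2 fun ζ => Real.iInf_nonneg (error_nonneg ζ)⟩ ζ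
    _ ≤ _ := ciInf_le ⟨0, Set.forall_mem_range.2 (error_nonneg ζ)⟩ Φ
    _ ≤ C := Real.iSup_le (fun f => hΦ f f.2) hC

variable [CompactSpace Ω] [OpensMeasurableSpace Ω] [IsProbabilityMeasure μ]
  {ι : Type*} [Fintype ι] {v N : ℕ} {g : Fin N → C(Ω, ℝ)} {ξ : ι → Ω} {D : ℝ}

lemma LpNorm_sub_le_of_isMinOn_sampling (hp : 1 ≤ p) (hvN : 2 * v ≤ N) (hD : 0 ≤ D)
    (hLDI : ∀ u ∈ sigmaSet (2 * v) g, LpNorm μ p u ≤ D * ⨆ j, |u (ξ j)|)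
    {f w : C(Ω, ℝ)} (hw : w ∈ sigmaSet v g)
    (hmin : IsMinOn (fun h => ‖sampling ξ f - sampling ξ h‖) (sigmaSet v g) w) :
    LpNorm μ p (f - w) ≤ (2 * D + 1) * bestVTerm v g f := by
  refine le_mul_bestVTerm (by omega) (by positivity) fun h hh => ?_
  have sub_mem : h - w ∈ sigmaSet (2 * v) g := by
    rw [two_mul] at hvN ⊢
    exact sub_mem_sigmaSet_add hvN hh hw
  calc LpNorm μ p (f - w) = LpNorm μ p (⇑(f - h) + ⇑(h - w)) := by
        rw [ContinuousMap.coe_sub, ContinuousMap.coe_sub, sub_add_sub_cancel]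
    _ ≤ LpNorm μ p (f - h : C(Ω, ℝ)) + LpNorm μ p (h - w : C(Ω, ℝ)) :=
        LpNorm_add_le hp (memLp_coe_continuousMap _ _) (memLp_coe_continuousMap _ _)
    _ ≤ ‖f - h‖ + D * ‖sampling ξ (h - w)‖ := by
        rw [norm_sampling_eq_iSup]
        exact add_le_add (LpNorm_coe_le_norm (by positivity) _) (hLDI _ sub_mem)
    _ ≤ ‖f - h‖ + D * (2 * ‖f - h‖) := by
        gcongr
        exact norm_sampling_sub_le_of_isMinOn hmin hh
    _ = (2 * D + 1) * ‖f - h‖ := by ring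

end Recovery

theorem stmt_17_general {Ω : Type*} [TopologicalSpace Ω] [CompactSpace Ω] [MeasurableSpace Ω]
    [OpensMeasurableSpace Ω] {μ : Measure Ω} [IsProbabilityMeasure μ] {p : ℝ} (hp : 1 ≤ p)
    {m v N : ℕ} (hvN : 2 * v ≤ N) {g : Fin N → C(Ω, ℝ)} {ξ : Fin m → Ω} {D : ℝ} (hD : 0 ≤ D)
    (hLDI : ∀ u ∈ sigmaSet (2 * v) g, LpNorm μ p u ≤ D * ⨆ j, |u (ξ j)|) :
    ∃ Ψ : (Fin m → ℝ) → C(Ω, ℝ),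
      (∀ y, Ψ y ∈ sigmaSet v g) ∧
      (∀ f : C(Ω, ℝ),
        LpNorm μ p (fun ω => f ω - Ψ (fun j => f (ξ j)) ω)
          ≤ (2 * D + 1) * bestVTerm v g f) ∧
      (∀ F : Set C(Ω, ℝ), Bornology.IsBounded F →
        (∀ f ∈ F,
          LpNorm μ p (fun ω => f ω - Ψ (fun j => f (ξ j)) ω)
            ≤ (2 * D + 1) * ⨆ h : F, bestVTerm v g (h : C(Ω, ℝ))) ∧
        rhoOpt μ p m F ≤ (2 * D + 1) * ⨆ h : F, bestVTerm v g (h : C(Ω, ℝ))) := by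
  have hv : v ≤ N := by omega
  choose Ψ Ψ_mem Ψ_isMinOn using
    exists_isMinOn_norm_sub_sigmaSet g hv (sampling ξ : C(Ω, ℝ) →ₗ[ℝ] (Fin m → ℝ))
  have error_le (f : C(Ω, ℝ)) : LpNorm μ p (fun ω => f ω - Ψ (fun j => f (ξ j)) ω)
      ≤ (2 * D + 1) * bestVTerm v g f :=
    LpNorm_sub_le_of_isMinOn_sampling hp hvN hD hLDI (Ψ_mem _) (Ψ_isMinOn (sampling ξ f))
  refine ⟨Ψ, Ψ_mem, error_le, fun F hF => ?_⟩
  have error_le_iSup (f : C(Ω, ℝ)) (hf : f ∈ F) :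
      LpNorm μ p (fun ω => f ω - Ψ (fun j => f (ξ j)) ω)
        ≤ (2 * D + 1) * ⨆ h : F, bestVTerm v g (h : C(Ω, ℝ)) := by
    refine (error_le f).trans ?_
    gcongr
    exact le_ciSup (bddAbove_range_bestVTerm g hv hF) ⟨f, hf⟩
  have iSup_nonneg : 0 ≤ ⨆ h : F, bestVTerm v g (h : C(Ω, ℝ)) :=
    Real.iSup_nonneg fun h => bestVTerm_nonneg (h : C(Ω, ℝ))
  exact ⟨error_le_iSup, rhoOpt_le (by positivity) ξ (fun y => Ψ y) error_le_iSup⟩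

/-- Theorem 6.3: under the universal LDI(p,∞) for `X_{2v}(D_N)`, there is a
recovery map `Ψ : ℝ^m → Σ_v(D_N)` using only the samples `f(ξ^j)` with
`‖f - Ψ(S(f,ξ))‖_p ≤ (2D+1) σ_v(f,D_N)_∞` for all `f ∈ C(Ω)`; in particular, for every
compact `F ⊂ C(Ω)` one has `ρ_m^o(F, L_p(Ω,μ)) ≤ (2D+1) σ_v(F, D_N)_∞`. -/
theorem stmt_17 (dd : ℕ) (Ω : Set (Fin dd → ℝ)) (hΩ : IsCompact Ω)
    (μ : Measure Ω) [IsProbabilityMeasure μ]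
    (p : ℝ) (hp : 1 ≤ p)
    (m v N : ℕ) (hvN : 2 * v ≤ N)
    (g : Fin N → C(Ω, ℝ))
    (ξ : Fin m → Ω) (D : ℝ) (hD : 0 < D)
    (hLDI : ∀ u ∈ sigmaSet (2 * v) g, LpNorm μ p ⇑u ≤ D * ⨆ j, |u (ξ j)|) :
    ∃ Ψ : (Fin m → ℝ) → C(Ω, ℝ),
      (∀ y, Ψ y ∈ sigmaSet v g) ∧
      (∀ f : C(Ω, ℝ),
        LpNorm μ p (fun ω => f ω - Ψ (fun j => f (ξ j)) ω)
          ≤ (2 * D + 1) * bestVTerm v g f) ∧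
      (∀ F : Set C(Ω, ℝ), IsCompact F →
        (∀ f ∈ F,
          LpNorm μ p (fun ω => f ω - Ψ (fun j => f (ξ j)) ω)
            ≤ (2 * D + 1) * ⨆ h : F, bestVTerm v g (h : C(Ω, ℝ))) ∧
        rhoOpt μ p m F ≤ (2 * D + 1) * ⨆ h : F, bestVTerm v g (h : C(Ω, ℝ))) := by
  have : CompactSpace Ω := isCompact_iff_compactSpace.1 hΩ
  obtain ⟨Ψ, Ψ_mem, error_le, error_le_of_bounded⟩ := stmt_17_general hp hvN hD.le hLDI
  exact ⟨Ψ, Ψ_mem, error_le, fun F hF => error_le_of_bounded F hF.isBounded⟩
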